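/- The pair X(z) = (℘'(z) + √3)/(2√3 ℘(z)), Y(z) = (℘'(−z) + √3)/(2√3 ℘(−z)) satisfies X(z)³ + Y(z)³ = 1 for all z where both are defined; i.e. it uniformizes the Fermat cubic X³ + Y³ = 1. -/

import Mathlib

open Complex

noncomputable section

/-- `e^{πi/3}`. -/
def τ : ℂ := Complex.exp (Real.pi * Complex.I / 3)

/-- The point `mϖ + n e^{πi/3} ϖ` of the hexagonal lattice with real period `ϖ`. -/
def hexPt (ϖ : ℝ) (p : ℤ × ℤ) : ℂ := p.1 * ϖ + p.2 * τ * ϖ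

/-- The hexagonal lattice `𝕋 = ℤϖ + ℤ e^{πi/3} ϖ`. -/
def hexLattice (ϖ : ℝ) : Set ℂ := Set.range (hexPt ϖ)

/-- The real fundamental period `ϖ = Γ(1/3)³/(2π)`. -/
def ϖ₀ : ℝ := (Real.Gamma (1/3))^3 / (2 * Real.pi)

/-- The Weierstrass `℘`-function of the hexagonal lattice `𝕋 = ℤϖ₀ + ℤ e^{πi/3} ϖ₀`,
i.e. the `℘`-function with invariants `g₂ = 0`, `g₃ = 1`. -/
def wp (z : ℂ) : ℂ :=
  1 / z ^ 2 + ∑' p : {p : ℤ × ℤ // p ≠ 0}, (1 / (z - hexPt ϖ₀ p) ^ 2 - 1 / (hexPt ϖ₀ p) ^ 2)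

/-- The Weierstrass `σ`-function of the hexagonal lattice with real period `ϖ`. -/
def wSigma (ϖ : ℝ) (z : ℂ) : ℂ :=
  z * ∏' p : {p : ℤ × ℤ // p ≠ 0},
    ((1 - z / hexPt ϖ p) * Complex.exp (z / hexPt ϖ p + z ^ 2 / (2 * (hexPt ϖ p) ^ 2)))

/-- The Weierstrass `ζ`-function of the hexagonal lattice with real period `ϖ`. -/
def wZeta (ϖ : ℝ) (z : ℂ) : ℂ :=
  1 / z + ∑' p : {p : ℤ × ℤ // p ≠ 0},
    (1 / (z - hexPt ϖ p) + 1 / hexPt ϖ p + z / (hexPt ϖ p) ^ 2)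

lemma hex_beta_real : (∫ u in Set.Ioo (0:ℝ) 1, u ^ (-(5/6) : ℝ) * (1 - u) ^ (-(1/2) : ℝ))
    = Real.Gamma (1/6) * Real.Gamma (1/2) / Real.Gamma (2/3) := by
  have h := Complex.betaIntegral_eq_Gamma_mul_div ((1/6:ℝ):ℂ) ((1/2:ℝ):ℂ)
    (by rw [Complex.ofReal_re]; norm_num) (by rw [Complex.ofReal_re]; norm_num)
  rw [← Complex.ofReal_add, Complex.Gamma_ofReal, Complex.Gamma_ofReal, Complex.Gamma_ofReal,
    show (1/6:ℝ)+1/2 = 2/3 by norm_num] at h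
  apply Complex.ofReal_injective
  push_cast
  rw [Complex.betaIntegral, intervalIntegral.integral_of_le zero_le_one,
    MeasureTheory.integral_Ioc_eq_integral_Ioo] at h
  rw [← h, ← integral_complex_ofReal]
  apply MeasureTheory.setIntegral_congr_fun measurableSet_Ioo
  intro u hu
  simp only [Complex.ofReal_mul]
  rw [Complex.ofReal_cpow hu.1.le, Complex.ofReal_cpow (by linarith [hu.2])]
  congr 2 <;> push_cast <;> norm_num

lemma hex_beta_val : Real.Gamma (1/6) * Real.Gamma (1/2) / Real.Gamma (2/3)
    = 2 ^ (2/3 : ℝ) * 3 * Real.Gamma (1/3) ^ 3 / (4 * Real.pi) := by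
  have h1 := Real.Gamma_mul_Gamma_add_half (1/6)
  have h2 := Real.Gamma_mul_Gamma_one_sub (1/3)
  rw [show (1/6:ℝ)+1/2 = 2/3 by norm_num, show 2*(1/6:ℝ) = 1/3 by norm_num,
    show 1 - (1/3:ℝ) = 2/3 by norm_num] at h1
  rw [show 1 - (1/3:ℝ) = 2/3 by norm_num, show Real.pi * (1/3) = Real.pi/3 by ring,
    Real.sin_pi_div_three] at h2
  rw [Real.Gamma_one_half_eq]
  have p1 : 0 < Real.Gamma (2/3) := Real.Gamma_pos_of_pos (by norm_num)
  have pp := Real.pi_pos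
  have hs : √Real.pi ^ 2 = Real.pi := Real.sq_sqrt pp.le
  have h3 : (√3:ℝ)^2 = 3 := Real.sq_sqrt (by norm_num)
  have h30 : (√3:ℝ) ≠ 0 := by positivity
  set a := Real.Gamma (1/6)
  set b := Real.Gamma (2/3)
  set c := Real.Gamma (1/3)
  set d := (2:ℝ)^(2/3:ℝ)
  have h4 : 3 * (c*b)^2 = 4 * Real.pi^2 := by
    rw [h2]; field_simp; rw [h3]; norm_num
  rw [div_eq_div_iff p1.ne' (by positivity)]
  have : b * (a * √Real.pi * (4 * Real.pi)) = b* (d * 3 * c ^ 3 * b) := by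
    have : b * (a * √Real.pi * (4 * Real.pi)) = (a*b) * √Real.pi * (4 * Real.pi) := by ring
    rw [this, h1]
    linear_combination c * d * 4 * Real.pi * hs - c*d*h4
  exact mul_left_cancel₀ p1.ne' this

lemma hex_period (f f' : ℝ → ℝ) (T g : ℝ) (hT : 0 < T) (hg : 0 < g)
    (hd : ∀ x ∈ Set.Ioc 0 T, HasDerivAt f (f' x) x)
    (ode : ∀ x ∈ Set.Ioc 0 T, f' x ^ 2 = 4 * f x ^ 3 - g)
    (hneg : ∀ x ∈ Set.Ioo 0 T, f' x < 0) (hend : f' T = 0)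
    (hlim : Filter.Tendsto f (nhdsWithin 0 (Set.Ioi 0)) Filter.atTop) :
    (∫ u in Set.Ioo (0:ℝ) 1, u ^ (-(5/6) : ℝ) * (1 - u) ^ (-(1/2) : ℝ))
      = 6 * (g/4) ^ (1/6 : ℝ) * T := by
  have fpos : ∀ x ∈ Set.Ioc 0 T, 0 < f x := by
    intro x hx
    by_contra hc
    push Not at hc
    have := ode x hx
    have h3 : f x ^ 3 ≤ 0 := by
      have : f x ^ 3 = f x * (f x)^2 := by ring
      rw [this]; exact mul_nonpos_of_nonpos_of_nonneg hc (sq_nonneg _)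
    nlinarith [sq_nonneg (f' x)]
  set u : ℝ → ℝ := fun x => g / (4 * f x ^ 3) with hu
  set u' : ℝ → ℝ := fun x => -(3 * g * f' x) / (4 * f x ^ 4) with hu'
  have hud : ∀ x ∈ Set.Ioc 0 T, HasDerivAt u (u' x) x := by
    intro x hx
    have p := fpos x hx
    have h1 := (((hd x hx).pow 3).const_mul 4).inv (by simp only [Pi.pow_apply]; positivity)
    have h2 := h1.const_mul g
    refine (h2.congr_deriv ?_).congr_of_eventuallyEq (Filter.Eventually.of_forall fun y => ?_)
    · simp only [hu', Pi.pow_apply]; field_simp; norm_num; ring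
    · simp [hu, div_eq_mul_inv]
  have hpos' : ∀ x ∈ Set.Ioo 0 T, 0 < u' x := by
    intro x hx
    have p := fpos x (Set.Ioo_subset_Ioc_self hx)
    have q := hneg x hx
    have : 0 < -(3 * g * f' x) := by nlinarith
    simp only [hu']; positivity
  have hcont : ContinuousOn u (Set.Ioc 0 T) := fun x hx => (hud x hx).continuousAt.continuousWithinAt
  have hmono : StrictMonoOn u (Set.Ioc 0 T) := by
    apply strictMonoOn_of_deriv_pos (convex_Ioc 0 T) hcont
    intro x hx
    rw [interior_Ioc] at hx
    rw [(hud x (Set.Ioo_subset_Ioc_self hx)).deriv]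
    exact hpos' x hx
  have huT : u T = 1 := by
    have := ode T ⟨hT, le_rfl⟩
    rw [hend] at this
    have p := fpos T ⟨hT, le_rfl⟩
    simp only [hu]
    rw [div_eq_one_iff_eq (by positivity)]; linarith
  have hu0 : Filter.Tendsto u (nhdsWithin 0 (Set.Ioi 0)) (nhds 0) := by
    apply Filter.Tendsto.const_div_atTop
    exact ((Filter.tendsto_pow_atTop (by norm_num)).comp hlim).const_mul_atTop (by norm_num)
  have himg : u '' Set.Ioo 0 T = Set.Ioo 0 1 := by
    ext y
    constructor
    · rintro ⟨x, hx, rfl⟩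
      have hx' := Set.Ioo_subset_Ioc_self hx
      have p := fpos x hx'
      refine ⟨by simp only [hu]; positivity, ?_⟩
      rw [← huT]; exact hmono hx' ⟨hT, le_rfl⟩ hx.2
    · intro hy
      have e1 := hu0.eventually (gt_mem_nhds hy.1)
      have e2 : ∀ᶠ x in nhdsWithin (0:ℝ) (Set.Ioi 0), x ∈ Set.Ioo 0 T := Ioo_mem_nhdsGT hT
      obtain ⟨a, ha, haT⟩ := (e1.and e2).exists
      have hsub : Set.Icc a T ⊆ Set.Ioc 0 T := fun t ht => ⟨haT.1.trans_le ht.1, ht.2⟩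
      obtain ⟨x, hx, hxy⟩ := intermediate_value_Icc haT.2.le (hcont.mono hsub)
        (show y ∈ Set.Icc (u a) (u T) from ⟨ha.le, by rw [huT]; exact hy.2.le⟩)
      refine ⟨x, ⟨(hsub hx).1, lt_of_le_of_ne hx.2 ?_⟩, hxy⟩
      rintro rfl
      rw [huT] at hxy; exact hy.2.ne hxy.symm
  rw [← himg, MeasureTheory.integral_image_eq_integral_abs_deriv_smul measurableSet_Ioo
    (fun x hx => (hud x (Set.Ioo_subset_Ioc_self hx)).hasDerivWithinAt)
    (hmono.injOn.mono Set.Ioo_subset_Ioc_self)]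
  rw [MeasureTheory.setIntegral_congr_fun (g := fun _ => 6 * (g/4) ^ (1/6 : ℝ)) measurableSet_Ioo]
  · simp [hT.le]; ring
  intro x hx
  have hx' := Set.Ioo_subset_Ioc_self hx
  have p := fpos x hx'
  have q := hneg x hx
  have o := ode x hx'
  simp only [smul_eq_mul]
  rw [abs_of_pos (hpos' x hx)]
  have e1 : 1 - u x = (-f' x)^2 / (4 * f x ^ 3) := by
    simp only [hu]; field_simp; linarith
  have e2 : u x = (g/4) / f x ^ 3 := by simp only [hu]; field_simp
  set m := -f' x with hm
  have mp : 0 < m := by linarith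
  have e3 : u' x = 3 * (g/4) * m / f x ^ 4 := by
    simp only [hu', hm]; field_simp
  rw [e1, e2, e3]
  set F := f x
  have hk : 0 < g/4 := by positivity
  clear_value m F
  generalize g/4 = k at hk
  have r1 : ∀ (a : ℝ) (n : ℕ) (y : ℝ), 0 < a → (a ^ n) ^ y = a ^ ((n:ℝ) * y) := fun a n y ha => by
    rw [← Real.rpow_natCast, ← Real.rpow_mul ha.le]
  rw [Real.div_rpow hk.le (by positivity), Real.div_rpow (by positivity) (by positivity),
    Real.mul_rpow (by norm_num) (by positivity), r1 F _ _ p, r1 F _ _ p, r1 m _ _ mp,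
    ← Real.rpow_natCast F]
  have h4 : (4:ℝ) ^ (-(1/2):ℝ) = 1/2 := by
    rw [show (4:ℝ) = 2^(2:ℝ) by norm_num, ← Real.rpow_mul (by norm_num)]
    norm_num [Real.rpow_neg_one]
  rw [h4]
  have hm1 : m ^ (((2:ℕ):ℝ) * -(1/2)) = m⁻¹ := by
    rw [← Real.rpow_neg_one]; norm_num
  have hF : F ^ (((4:ℕ):ℝ)) * F ^ (((3:ℕ):ℝ) * -(5/6)) * F ^ (((3:ℕ):ℝ) * -(1/2)) = 1 := by
    rw [← Real.rpow_add p, ← Real.rpow_add p]; norm_num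
  have hkk : k ^ (1/6:ℝ) = k * k ^ (-(5/6):ℝ) := by
    nth_rewrite 2 [← Real.rpow_one k]
    rw [← Real.rpow_add hk]; norm_num
  rw [hm1, hkk]
  have f1 : 0 < F ^ (((4:ℕ):ℝ)) := by positivity
  have f2 : 0 < F ^ (((3:ℕ):ℝ) * -(5/6)) := by positivity
  have f3 : 0 < F ^ (((3:ℕ):ℝ) * -(1/2)) := by positivity
  calc _ = 6 * (k * k ^ (-(5/6):ℝ)) / (F ^ (((4:ℕ):ℝ)) * F ^ (((3:ℕ):ℝ) * -(5/6)) * F ^ (((3:ℕ):ℝ) * -(1/2))) := by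
        field_simp; norm_num
    _ = _ := by rw [hF, div_one]

lemma hex_g_eq_one (g : ℝ) (hg : 0 < g)
    (h : 2 ^ (2/3 : ℝ) * 3 * Real.Gamma (1/3) ^ 3 / (4 * Real.pi) =
      6 * (g/4) ^ (1/6 : ℝ) * (Real.Gamma (1/3) ^ 3 / (2 * Real.pi) / 2)) : g = 1 := by
  have p1 : 0 < Real.Gamma (1/3) := Real.Gamma_pos_of_pos (by norm_num)
  have pp := Real.pi_pos
  have h1 : (2:ℝ) ^ (2/3 : ℝ) = 2 * (g/4) ^ (1/6 : ℝ) := by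
    field_simp at h ⊢
    linarith
  have h2 := congrArg (fun x : ℝ => x ^ 6) h1
  simp only [mul_pow] at h2
  rw [← Real.rpow_natCast, ← Real.rpow_mul (by norm_num), ← Real.rpow_natCast (_ ^ _),
    ← Real.rpow_mul (by positivity)] at h2
  norm_num at h2
  linarith

lemma hex_tau : τ = ⟨1/2, √3/2⟩ := by
  rw [τ, show (Real.pi * Complex.I / 3 : ℂ) = ((Real.pi/3 : ℝ) : ℂ) * Complex.I by push_cast; ring,
    Complex.exp_mul_I, ← Complex.ofReal_cos, ← Complex.ofReal_sin, Real.cos_pi_div_three,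
    Real.sin_pi_div_three]
  apply Complex.ext <;> simp

lemma hex_tau_sq : τ ^ 2 = τ - 1 := by
  rw [hex_tau]
  have h3 : (√3:ℝ) * √3 = 3 := Real.mul_self_sqrt (by norm_num)
  apply Complex.ext <;> simp [sq] <;> linarith

lemma hex_tau_conj : (starRingEnd ℂ) τ = 1 - τ := by
  rw [hex_tau]
  apply Complex.ext <;> simp; norm_num

lemma hex_tau_pow_six : τ ^ 6 = 1 := by
  have h := hex_tau_sq
  linear_combination (τ^4 + τ^3 - τ - 1) * h

lemma hex_pos : 0 < ϖ₀ := by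
  have p1 : 0 < Real.Gamma (1/3) := Real.Gamma_pos_of_pos (by norm_num)
  have pp := Real.pi_pos
  unfold ϖ₀; positivity

lemma hex_s3 : (0:ℝ) < √3 := by positivity

/-- The period pair of the hexagonal lattice. -/
def hexL : PeriodPair where
  ω₁ := ϖ₀
  ω₂ := τ * ϖ₀
  indep := by
    rw [LinearIndependent.pair_iff]
    intro s t h
    have hp := hex_pos
    have h3 := hex_s3
    rw [hex_tau] at h
    have h1 := congrArg Complex.re h
    have h2 := congrArg Complex.im h
    simp [hp.ne'] at h1 h2
    subst h2
    simpa [hp.ne'] using h1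

lemma hex_symm (p : ℤ × ℤ) : ((hexL.latticeEquivProd.symm p : hexL.lattice) : ℂ) = hexPt ϖ₀ p := by
  rw [PeriodPair.latticeEquiv_symm_apply]
  simp [hexL, hexPt]; ring

lemma hex_mem (z : ℂ) : z ∈ hexL.lattice ↔ z ∈ hexLattice ϖ₀ := by
  rw [PeriodPair.mem_lattice]
  simp only [hexLattice, Set.mem_range, Prod.exists, hexPt, hexL, mul_assoc]

lemma hex_hasSum (F : ℂ → ℂ) (a : ℂ) :
    HasSum (fun l : hexL.lattice => F l) a ↔ HasSum (fun p : ℤ × ℤ => F (hexPt ϖ₀ p)) a := by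
  rw [← hexL.latticeEquivProd.symm.toEquiv.hasSum_iff]
  simp only [Function.comp_def]
  simp only [LinearEquiv.coe_toEquiv, hex_symm]

lemma hex_tsum (F : ℂ → ℂ) :
    ∑' l : hexL.lattice, F l = ∑' p : ℤ × ℤ, F (hexPt ϖ₀ p) := by
  rw [← hexL.latticeEquivProd.symm.toEquiv.tsum_eq]
  simp only [LinearEquiv.coe_toEquiv, hex_symm]

lemma hex_wp : wp = hexL.weierstrassP := by
  funext z
  have h := (hex_hasSum (fun l => 1 / (z - l) ^ 2 - 1 / l ^ 2) _).1 (hexL.hasSum_weierstrassP z)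
  have hs := h.summable
  have h2 := hs.tsum_eq_add_tsum_ite (0 : ℤ × ℤ)
  rw [← h.tsum_eq, h2, wp]
  congr 1
  · simp [hexPt]
  · rw [show (fun p : {p : ℤ × ℤ // p ≠ 0} => (1 / (z - hexPt ϖ₀ p) ^ 2 - 1 / (hexPt ϖ₀ p) ^ 2)) =
      (fun p : ({0}ᶜ : Set (ℤ × ℤ)) => (fun q : ℤ × ℤ => 1 / (z - hexPt ϖ₀ q) ^ 2 - 1 / (hexPt ϖ₀ q) ^ 2) p) from rfl]
    refine (tsum_subtype ({0}ᶜ : Set (ℤ × ℤ)) (fun q : ℤ × ℤ => 1 / (z - hexPt ϖ₀ q) ^ 2 - 1 / (hexPt ϖ₀ q) ^ 2)).trans ?_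
    congr 1; funext p
    by_cases hp : p = 0 <;> simp [Set.indicator, hp]

/-- Multiplication by `τ` on coordinates. -/
def hexRot : ℤ × ℤ ≃ ℤ × ℤ where
  toFun p := (-p.2, p.1 + p.2)
  invFun p := (p.1 + p.2, -p.1)
  left_inv p := by ext <;> simp
  right_inv p := by ext <;> simp

/-- Complex conjugation on coordinates. -/
def hexConj : ℤ × ℤ ≃ ℤ × ℤ where
  toFun p := (p.1 + p.2, -p.2)
  invFun p := (p.1 + p.2, -p.2)
  left_inv p := by ext <;> simp
  right_inv p := by ext <;> simp

lemma hexPt_rot (p : ℤ × ℤ) : hexPt ϖ₀ (hexRot p) = τ * hexPt ϖ₀ p := by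
  simp only [hexPt, hexRot, Equiv.coe_fn_mk]
  push_cast
  linear_combination -((p.2:ℂ) * ϖ₀) * hex_tau_sq

lemma hexPt_conj (p : ℤ × ℤ) : hexPt ϖ₀ (hexConj p) = (starRingEnd ℂ) (hexPt ϖ₀ p) := by
  simp only [hexPt, hexConj, Equiv.coe_fn_mk, map_add, map_mul, hex_tau_conj, Complex.conj_ofReal,
    map_intCast]
  push_cast
  ring

lemma hex_g2 : hexL.g₂ = 0 := by
  have h : hexL.G 4 = (τ ^ 4)⁻¹ * hexL.G 4 := by
    unfold PeriodPair.G
    rw [hex_tsum (fun l => (l ^ 4)⁻¹)]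
    conv_lhs => rw [← hexRot.tsum_eq]
    rw [← tsum_mul_left]
    congr 1; funext p
    rw [hexPt_rot, mul_pow, mul_inv]
  have ht : τ ^ 4 = -τ := by linear_combination (τ^2 + τ) * hex_tau_sq
  rw [ht] at h
  have hne : (1 - (-τ)⁻¹) ≠ 0 := by
    intro h0
    have : (-τ)⁻¹ = 1 := by linear_combination -h0
    rw [inv_eq_one] at this
    have := congrArg Complex.im this
    rw [hex_tau] at this
    have := hex_s3
    simp_all
  have : hexL.G 4 = 0 := by
    have : (1 - (-τ)⁻¹) * hexL.G 4 = 0 := by linear_combination h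
    exact (mul_eq_zero.1 this).resolve_left hne
  simp [PeriodPair.g₂, this]

lemma hex_P_conj (z : ℂ) : (starRingEnd ℂ) (hexL.weierstrassP z) = hexL.weierstrassP ((starRingEnd ℂ) z) := by
  unfold PeriodPair.weierstrassP
  rw [hex_tsum (fun l => 1 / (z - l) ^ 2 - 1 / l ^ 2),
    hex_tsum (fun l => 1 / ((starRingEnd ℂ) z - l) ^ 2 - 1 / l ^ 2), Complex.conj_tsum]
  conv_rhs => rw [← hexConj.tsum_eq]
  congr 1; funext p
  simp [hexPt_conj]

lemma hex_P'_conj (z : ℂ) : (starRingEnd ℂ) (hexL.derivWeierstrassP z) = hexL.derivWeierstrassP ((starRingEnd ℂ) z) := by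
  unfold PeriodPair.derivWeierstrassP
  rw [hex_tsum (fun l => 2 / (z - l) ^ 3),
    hex_tsum (fun l => 2 / ((starRingEnd ℂ) z - l) ^ 3), map_neg, Complex.conj_tsum]
  conv_rhs => rw [← hexConj.tsum_eq]
  congr 2; funext p
  have h2 : (starRingEnd ℂ) 2 = 2 := Complex.conj_ofNat 2
  simp [hexPt_conj, h2]

lemma hex_P_real (x : ℝ) : ((hexL.weierstrassP x).re : ℂ) = hexL.weierstrassP x := by
  apply Complex.conj_eq_iff_re.1
  rw [hex_P_conj, Complex.conj_ofReal]

lemma hex_P'_real (x : ℝ) : ((hexL.derivWeierstrassP x).re : ℂ) = hexL.derivWeierstrassP x := by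
  apply Complex.conj_eq_iff_re.1
  rw [hex_P'_conj, Complex.conj_ofReal]


lemma hex_zeta3_partial (n : ℕ) :
    ∑ k ∈ Finset.range (n+1), 1 / ((k:ℝ)+1)^3 ≤ 5/4 - 1 / (2 * ((n:ℝ)+1) * (n+2)) := by
  induction n with
  | zero => norm_num
  | succ n ih =>
    rw [Finset.sum_range_succ]
    have : 1 / (((n+1:ℕ):ℝ)+1)^3 ≤ 1 / (2 * ((n:ℝ)+1) * (n+2)) - 1 / (2 * (((n+1:ℕ):ℝ)+1) * (((n+1:ℕ):ℝ)+2)) := by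
      push_cast
      rw [div_sub_div _ _ (by positivity) (by positivity), div_le_div_iff₀ (by positivity) (by positivity)]
      have : (0:ℝ) ≤ n := by positivity
      rw [← sub_nonneg]
      ring_nf
      positivity
    linarith

/-- `1/|m|^3`. -/
def hexd (m : ℤ) : ℝ := 1 / |(m:ℝ)| ^ 3

lemma hexd_nonneg (m : ℤ) : 0 ≤ hexd m := by unfold hexd; positivity

lemma hexd_summable : Summable hexd := by
  have h := Real.summable_one_div_int_pow (p := 3) |>.2 (by norm_num)
  refine h.abs.congr ?_
  intro m
  simp [hexd, abs_inv, abs_pow]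

lemma hexd_tsum : ∑' m, hexd m ≤ 5/2 := by
  have hz : ∑' k : ℕ, 1 / ((k:ℝ)+1)^3 ≤ 5/4 := by
    apply Real.tsum_le_of_sum_range_le
    · intro n; positivity
    · intro n
      cases n with
      | zero => norm_num
      | succ n =>
        refine (hex_zeta3_partial n).trans ?_
        have : 0 < 1 / (2 * ((n:ℝ)+1) * (n+2)) := by positivity
        linarith
  have hs := hexd_summable
  have i1 : Function.Injective (fun n : ℕ => (n:ℤ)) := Nat.cast_injective
  have i2 : Function.Injective (fun n : ℕ => -((n:ℤ)+1)) := fun a b h => by simpa using h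
  rw [tsum_of_nat_of_neg_add_one (hs.comp_injective i1) (hs.comp_injective i2)]
  have s1 : Summable (fun n : ℕ => hexd n) := hs.comp_injective i1
  rw [s1.tsum_eq_zero_add]
  have e1 : ∀ n : ℕ, hexd ((n+1:ℕ):ℤ) = 1 / ((n:ℝ)+1)^3 := by
    intro n
    simp only [hexd]
    push_cast
    rw [abs_of_pos (by positivity)]
  have e2 : ∀ n : ℕ, hexd (-((n:ℤ)+1)) = 1 / ((n:ℝ)+1)^3 := by
    intro n
    simp only [hexd]
    push_cast
    rw [abs_neg, abs_of_pos (by positivity)]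
  simp only [e1, e2]
  have e0 : hexd ((0:ℕ):ℤ) = 0 := by simp [hexd]
  rw [e0]; linarith

lemma hex_normSq (m n : ℤ) : Complex.normSq ((m:ℂ) + n * τ) = (m:ℝ)^2 + m*n + n^2 := by
  have h3 : (√3:ℝ) * √3 = 3 := Real.mul_self_sqrt (by norm_num)
  rw [hex_tau, Complex.normSq_apply]
  simp
  linear_combination (n:ℝ)^2/4 * h3

lemma hex_term_ge (m n : ℤ) (hm : m ≠ 0) (hn : n ≠ 0) :
    -(hexd m * hexd n) ≤ ((((m:ℂ) + n * τ) ^ 6)⁻¹).re := by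
  have h1 := Complex.abs_re_le_norm ((((m:ℂ) + n * τ) ^ 6)⁻¹)
  have h2 : ‖(((m:ℂ) + n * τ) ^ 6)⁻¹‖ = 1 / ((m:ℝ)^2 + m*n + n^2)^3 := by
    rw [norm_inv, norm_pow, ← hex_normSq, Complex.normSq_eq_norm_sq, one_div]
    congr 1; ring
  have hm' : (0:ℝ) < |(m:ℝ)| := by positivity
  have hn' : (0:ℝ) < |(n:ℝ)| := by positivity
  have h3 : |(m:ℝ)| * |(n:ℝ)| ≤ (m:ℝ)^2 + m*n + n^2 := by
    rw [← abs_mul]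
    apply abs_le.2; constructor <;> nlinarith [sq_nonneg ((m:ℝ)+n), sq_nonneg ((m:ℝ))]
  have h4 : 1 / ((m:ℝ)^2 + m*n + n^2)^3 ≤ hexd m * hexd n := by
    rw [hexd, hexd, div_mul_div_comm, ← mul_pow, one_mul]
    gcongr
  have := (abs_le.1 h1).1
  linarith

lemma hex_g3_sum_pos (S : ℂ) (h : HasSum (fun p : ℤ × ℤ => (((p.1:ℂ) + p.2 * τ) ^ 6)⁻¹) S) :
    0 < S.re := by
  have hre := Complex.hasSum_re h
  have hs := hexd_summable
  have hprod : HasSum (fun p : ℤ × ℤ => hexd p.1 * hexd p.2) ((∑' m, hexd m) * (∑' m, hexd m)) :=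
    hs.hasSum.mul hs.hasSum
      (hs.mul_of_nonneg hs hexd_nonneg hexd_nonneg)
  have hfin : ∀ (q : ℤ × ℤ) (c : ℝ), HasSum (fun p : ℤ × ℤ => if p = q then c else 0) c :=
    fun q c => hasSum_ite_eq q c
  have hb := ((((((hprod.neg).add (hfin (1,0) 1)).add (hfin (-1,0) 1)).add (hfin (0,1) 1)).add
    (hfin (0,-1) 1)).add (hfin (1,-1) 2)).add (hfin (-1,1) 2)
  have hle := hasSum_le (fun p => ?_) hb hre
  · have := hexd_tsum
    have h0 : 0 ≤ ∑' m, hexd m := tsum_nonneg hexd_nonneg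
    nlinarith
  · obtain ⟨m, n⟩ := p
    have d0 : hexd 0 = 0 := by simp [hexd]
    have d1 : hexd 1 = 1 := by simp [hexd]
    have d2 : hexd (-1) = 1 := by simp [hexd]
    have t6 := hex_tau_pow_six
    by_cases hn : n = 0
    · subst hn
      have e : ((((m:ℂ) + ((0:ℤ):ℂ) * τ) ^ 6)⁻¹).re = ((m:ℝ)^6)⁻¹ := by
        rw [← Complex.ofReal_re (((m:ℝ)^6)⁻¹)]; push_cast; simp
      have e0 : 0 ≤ ((m:ℝ)^6)⁻¹ := by positivity
      simp only [e]
      by_cases h1 : m = 1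
      · subst h1; simp [d0]
      by_cases h2 : m = -1
      · subst h2; simp [d0]; norm_num
      simpa [h1, h2, d0] using e0
    by_cases hm : m = 0
    · subst hm
      have e : (((((0:ℤ):ℂ) + (n:ℂ) * τ) ^ 6)⁻¹).re = ((n:ℝ)^6)⁻¹ := by
        rw [← Complex.ofReal_re (((n:ℝ)^6)⁻¹)]; push_cast; simp [mul_pow, t6]
      have e0 : 0 ≤ ((n:ℝ)^6)⁻¹ := by positivity
      simp only [e]
      by_cases h1 : n = 1
      · subst h1; simp [d0]
      by_cases h2 : n = -1
      · subst h2; simp [d0]; norm_num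
      simpa [h1, h2, d0] using e0
    by_cases h1 : m = 1 ∧ n = -1
    · obtain ⟨rfl, rfl⟩ := h1
      have : ((((1:ℤ):ℂ) + ((-1:ℤ):ℂ) * τ) ^ 6) = 1 := by
        push_cast
        rw [show (1:ℂ) + -1 * τ = - τ^2 by rw [hex_tau_sq]; ring]
        linear_combination (τ^6+1) * t6
      simp only [this]
      simp [d1, d2]; norm_num
    by_cases h2 : m = -1 ∧ n = 1
    · obtain ⟨rfl, rfl⟩ := h2
      have : ((((-1:ℤ):ℂ) + ((1:ℤ):ℂ) * τ) ^ 6) = 1 := by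
        push_cast
        rw [show (-1:ℂ) + 1 * τ = τ^2 by rw [hex_tau_sq]; ring]
        linear_combination (τ^6+1) * t6
      simp only [this]
      simp [d1, d2]; norm_num
    have := hex_term_ge m n hm hn
    simpa [hm, hn, h1, h2] using this

lemma hex_g3_pos : 0 < hexL.g₃.re := by
  have h := hexL.hasSum_sumInvPow 0 (r := 6) (by norm_num)
  simp only [sub_zero] at h
  rw [hex_hasSum (fun l => (l ^ 6)⁻¹)] at h
  have h2 := h.mul_left ((ϖ₀:ℂ)^6)
  have hp := hex_pos
  have hp' : (ϖ₀:ℂ) ≠ 0 := by exact_mod_cast hp.ne'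
  have h3 : (fun p : ℤ × ℤ => (ϖ₀:ℂ)^6 * ((hexPt ϖ₀ p) ^ 6)⁻¹) =
      fun p : ℤ × ℤ => (((p.1:ℂ) + p.2 * τ) ^ 6)⁻¹ := by
    funext p
    rw [hexPt, show (p.1:ℂ) * ϖ₀ + p.2 * τ * ϖ₀ = ϖ₀ * ((p.1:ℂ) + p.2 * τ) by ring, mul_pow, mul_inv,
      mul_inv_cancel_left₀ (pow_ne_zero _ hp')]
  rw [h3] at h2
  have h4 := hex_g3_sum_pos _ h2
  rw [PeriodPair.sumInvPow_zero, ← Complex.ofReal_pow, Complex.re_ofReal_mul] at h4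
  have h5 : 0 < (hexL.G 6).re := by
    by_contra hc
    push Not at hc
    nlinarith [pow_pos hp 6]
  rw [PeriodPair.g₃, show (140:ℂ) = ((140:ℝ):ℂ) by norm_num, Complex.re_ofReal_mul]
  linarith

lemma hex_countable : (hexL.lattice : Set ℂ).Countable := by
  have : (hexL.lattice : Set ℂ) = Set.range (hexPt ϖ₀) := by
    ext z; exact hex_mem z
  rw [this]; exact Set.countable_range _

lemma hex_preconn : IsPreconnected ((hexL.lattice : Set ℂ)ᶜ) :=
  (hex_countable.isConnected_compl_of_one_lt_rank (by
    rw [Complex.rank_real_complex]; norm_num)).isPreconnected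

lemma hex_notMem_real (x : ℝ) (hx : x ∈ Set.Ioo 0 ϖ₀) : (x:ℂ) ∉ hexL.lattice := by
  rw [hex_mem]
  rintro ⟨⟨m, n⟩, h⟩
  have hp := hex_pos
  simp only [hexPt, hex_tau] at h
  have h2 := congrArg Complex.im h
  have h1 := congrArg Complex.re h
  have h3 := hex_s3
  simp [hp.ne'] at h1 h2
  subst h2
  simp at h1
  have a1 : (0:ℝ) < m := by
    by_contra hc; push Not at hc; nlinarith [hx.1]
  have a2 : (m:ℝ) < 1 := by
    by_contra hc; push Not at hc; nlinarith [hx.2]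
  have b1 : 0 < m := by exact_mod_cast a1
  have b2 : m < 1 := by exact_mod_cast a2
  omega

lemma hex_ode (z : ℂ) (hz : z ∉ hexL.lattice) :
    hexL.derivWeierstrassP z ^ 2 = 4 * hexL.weierstrassP z ^ 3 - hexL.g₃ := by
  rw [hexL.derivWeierstrassP_sq z hz, hex_g2]; ring

lemma hex_P_hasDerivAt (z : ℂ) (hz : z ∉ hexL.lattice) :
    HasDerivAt hexL.weierstrassP (hexL.derivWeierstrassP z) z := by
  rw [← PeriodPair.deriv_weierstrassP]
  exact (hexL.analyticOnNhd_weierstrassP z hz).differentiableAt.hasDerivAt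

lemma hex_P'_hasDerivAt (z : ℂ) (hz : z ∉ hexL.lattice) :
    HasDerivAt hexL.derivWeierstrassP (deriv hexL.derivWeierstrassP z) z :=
  (hexL.analyticOnNhd_derivWeierstrassP z hz).differentiableAt.hasDerivAt

lemma hex_lim : Filter.Tendsto (fun x : ℝ => (hexL.weierstrassP x).re)
    (nhdsWithin 0 (Set.Ioi 0)) Filter.atTop := by
  have h1 : ContinuousAt (hexL.weierstrassPExcept 0) 0 :=
    (hexL.analyticAt_weierstrassPExcept 0).continuousAt
  have h2 : Filter.Tendsto (fun x : ℝ => (hexL.weierstrassPExcept 0 x).re) (nhdsWithin 0 (Set.Ioi 0))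
      (nhds (hexL.weierstrassPExcept 0 0).re) := by
    apply (Complex.continuous_re.tendsto _).comp
    apply h1.tendsto.comp
    exact (Complex.continuous_ofReal.tendsto' 0 0 (by simp)).mono_left nhdsWithin_le_nhds
  have h3 : Filter.Tendsto (fun x : ℝ => (x⁻¹)^2) (nhdsWithin 0 (Set.Ioi 0)) Filter.atTop :=
    (Filter.tendsto_pow_atTop (by norm_num)).comp tendsto_inv_nhdsGT_zero
  refine (h2.add_atTop h3).congr ?_
  intro x
  have := hexL.weierstrassPExcept_add 0 (x:ℂ)
  rw [← this]
  simp only [ZeroMemClass.coe_zero]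
  rw [Complex.add_re]
  congr 1
  rw [← Complex.ofReal_re ((x⁻¹)^2)]
  push_cast
  simp

lemma hex_half_mem : ϖ₀/2 ∈ Set.Ioo 0 ϖ₀ := by
  have := hex_pos
  constructor <;> linarith

lemma hex_real_deriv (x : ℝ) (hx : x ∈ Set.Ioo 0 ϖ₀) :
    HasDerivAt (fun x : ℝ => (hexL.weierstrassP x).re) (hexL.derivWeierstrassP x).re x :=
  (hex_P_hasDerivAt x (hex_notMem_real x hx)).real_of_complex

lemma hex_second (z : ℂ) (hz : z ∉ hexL.lattice) :
    deriv hexL.derivWeierstrassP z = 6 * hexL.weierstrassP z ^ 2 := by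
  have hopen := hexL.isClosed_lattice.isOpen_compl
  have hmul : ∀ w ∉ hexL.lattice, hexL.derivWeierstrassP w *
      (deriv hexL.derivWeierstrassP w - 6 * hexL.weierstrassP w ^ 2) = 0 := by
    intro w hw
    have a := (hex_P'_hasDerivAt w hw).fun_pow 2
    have b := (((hex_P_hasDerivAt w hw).fun_pow 3).const_mul 4).sub_const hexL.g₃
    have e : (fun w => hexL.derivWeierstrassP w ^ 2) =ᶠ[nhds w]
        (fun w => 4 * hexL.weierstrassP w ^ 3 - hexL.g₃) := by
      filter_upwards [hopen.mem_nhds hw] with y hy using hex_ode y hy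
    have c := a.unique (b.congr_of_eventuallyEq e)
    norm_num at c
    linear_combination c / 2
  have an1 : AnalyticOnNhd ℂ hexL.derivWeierstrassP (hexL.lattice : Set ℂ)ᶜ :=
    hexL.analyticOnNhd_derivWeierstrassP
  have an2 : AnalyticOnNhd ℂ
      (fun w => deriv hexL.derivWeierstrassP w - 6 * hexL.weierstrassP w ^ 2) (hexL.lattice : Set ℂ)ᶜ :=
    an1.deriv.sub (analyticOnNhd_const.mul (hexL.analyticOnNhd_weierstrassP.pow 2))
  rcases an1.eq_zero_or_eq_zero_of_mul_eq_zero an2 hmul hex_preconn with h | h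
  · exfalso
    have hconst : ∀ x ∈ Set.Ioo 0 ϖ₀, (hexL.weierstrassP x).re
        = (hexL.weierstrassP ((ϖ₀/2:ℝ):ℂ)).re := by
      intro x hx
      refine isOpen_Ioo.is_const_of_deriv_eq_zero (f := fun x : ℝ => (hexL.weierstrassP x).re)
        isPreconnected_Ioo
        (fun y hy => (hex_real_deriv y hy).differentiableAt.differentiableWithinAt) ?_ hx hex_half_mem
      intro y hy
      rw [(hex_real_deriv y hy).deriv, h _ (hex_notMem_real y hy)]
      simp
    have e1 := hex_lim.eventually_gt_atTop (hexL.weierstrassP ((ϖ₀/2:ℝ):ℂ)).re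
    have e2 : ∀ᶠ x in nhdsWithin (0:ℝ) (Set.Ioi 0), x ∈ Set.Ioo 0 ϖ₀ := Ioo_mem_nhdsGT hex_pos
    obtain ⟨x, h1, h2⟩ := (e1.and e2).exists
    exact h1.ne' (hconst x h2)
  · exact sub_eq_zero.1 (h z hz)

lemma hex_real_deriv2 (x : ℝ) (hx : x ∈ Set.Ioo 0 ϖ₀) :
    HasDerivAt (fun x : ℝ => (hexL.derivWeierstrassP x).re) (6 * (hexL.weierstrassP x).re ^ 2) x := by
  have h := (hex_P'_hasDerivAt x (hex_notMem_real x hx)).real_of_complex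
  rw [hex_second _ (hex_notMem_real x hx), ← hex_P_real] at h
  convert! h using 1
  rw [← Complex.ofReal_re (6 * (hexL.weierstrassP x).re ^ 2)]
  push_cast
  simp

lemma hex_real_ode (x : ℝ) (hx : x ∈ Set.Ioo 0 ϖ₀) :
    (hexL.derivWeierstrassP x).re ^ 2 = 4 * (hexL.weierstrassP x).re ^ 3 - hexL.g₃.re := by
  have h := hex_ode x (hex_notMem_real x hx)
  rw [← hex_P_real, ← hex_P'_real] at h
  have h2 := congrArg Complex.re h
  rw [Complex.sub_re] at h2
  norm_cast at h2

lemma hex_g3_real : hexL.g₃ = (hexL.g₃.re : ℂ) := by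
  have h := hex_ode _ (hex_notMem_real _ hex_half_mem)
  have h' := hex_real_ode _ hex_half_mem
  rw [← hex_P_real, ← hex_P'_real] at h
  have h2 : hexL.g₃.re = 4 * (hexL.weierstrassP ((ϖ₀/2:ℝ):ℂ)).re ^ 3 - (hexL.derivWeierstrassP ((ϖ₀/2:ℝ):ℂ)).re ^ 2 := by
    linarith
  rw [h2]
  push_cast at h ⊢
  linear_combination h

lemma hex_half_zero : hexL.derivWeierstrassP ((ϖ₀/2:ℝ):ℂ) = 0 := by
  have h1 := hexL.derivWeierstrassP_sub_coe ((ϖ₀/2:ℝ):ℂ) ⟨hexL.ω₁, hexL.ω₁_mem_lattice⟩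
  have h2 : ((ϖ₀/2:ℝ):ℂ) - hexL.ω₁ = -((ϖ₀/2:ℝ):ℂ) := by
    simp only [hexL]; push_cast; ring
  simp only [h2, PeriodPair.derivWeierstrassP_neg] at h1
  linear_combination -h1/2

lemma hex_neg (x : ℝ) (hx : x ∈ Set.Ioo 0 (ϖ₀/2)) : (hexL.derivWeierstrassP x).re < 0 := by
  have hp := hex_pos
  have hsub : Set.Ioo 0 (ϖ₀/2) ⊆ Set.Ioo 0 ϖ₀ := fun y hy => ⟨hy.1, by linarith [hy.2]⟩
  have mono : MonotoneOn (fun x : ℝ => (hexL.derivWeierstrassP x).re) (Set.Ioo 0 ϖ₀) := by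
    apply monotoneOn_of_deriv_nonneg (convex_Ioo _ _)
    · exact fun y hy => (hex_real_deriv2 y hy).continuousAt.continuousWithinAt
    · intro y hy
      rw [interior_Ioo] at hy
      exact (hex_real_deriv2 y hy).differentiableAt.differentiableWithinAt
    · intro y hy
      rw [interior_Ioo] at hy
      rw [(hex_real_deriv2 y hy).deriv]; positivity
  have hle : ∀ y ∈ Set.Ioo 0 (ϖ₀/2), (hexL.derivWeierstrassP y).re ≤ 0 := by
    intro y hy
    have := mono (hsub hy) hex_half_mem hy.2.le
    simp only [hex_half_zero] at this
    simpa using this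
  refine lt_of_le_of_ne (hle x hx) fun h0 => ?_
  have hz : ∀ y ∈ Set.Ioo x (ϖ₀/2), (hexL.derivWeierstrassP y).re = 0 := by
    intro y hy
    have hy' : y ∈ Set.Ioo 0 (ϖ₀/2) := ⟨hx.1.trans hy.1, hy.2⟩
    apply le_antisymm (hle y hy')
    rw [← h0]
    exact mono (hsub hx) (hsub hy') hy.1.le
  obtain ⟨y, hy⟩ := exists_between hx.2
  have hy' : y ∈ Set.Ioo 0 ϖ₀ := hsub ⟨hx.1.trans hy.1, hy.2⟩
  have e : (fun x : ℝ => (hexL.derivWeierstrassP x).re) =ᶠ[nhds y] fun _ => 0 := by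
    filter_upwards [Ioo_mem_nhds hy.1 hy.2] with t ht using hz t ht
  have u := (hex_real_deriv2 y hy').unique ((hasDerivAt_const y (0:ℝ)).congr_of_eventuallyEq e)
  have f0 : (hexL.weierstrassP y).re = 0 := by
    have : (hexL.weierstrassP y).re ^ 2 = 0 := by linarith
    exact pow_eq_zero_iff (by norm_num) |>.1 this
  have o := hex_real_ode y hy'
  rw [f0, hz y hy] at o
  have := hex_g3_pos
  norm_num at o
  linarith

lemma hex_g3 : hexL.g₃ = 1 := by
  have hp := hex_pos
  have hsub : Set.Ioc 0 (ϖ₀/2) ⊆ Set.Ioo 0 ϖ₀ := fun y hy => ⟨hy.1, by linarith [hy.2]⟩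
  have h := hex_period (fun x : ℝ => (hexL.weierstrassP x).re)
    (fun x : ℝ => (hexL.derivWeierstrassP x).re) (ϖ₀/2) hexL.g₃.re (by linarith) hex_g3_pos
    (fun x hx => hex_real_deriv x (hsub hx)) (fun x hx => hex_real_ode x (hsub hx)) hex_neg
    (by simp only [hex_half_zero]; simp) hex_lim
  rw [hex_beta_real, hex_beta_val] at h
  have := hex_g_eq_one _ hex_g3_pos h
  rw [hex_g3_real, this]; simp

/-- `X(z) = (℘'(z) + √3)/(2√3 ℘(z))`, `Y(z) = (℘'(−z) + √3)/(2√3 ℘(−z))`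
satisfy `X³ + Y³ = 1` wherever defined, uniformizing the Fermat cubic. -/
theorem fermat_cubic_uniformization (z : ℂ) (hz : z ∉ hexLattice ϖ₀)
    (h0 : wp z ≠ 0) (h0' : wp (-z) ≠ 0) :
    ((deriv wp z + (Real.sqrt 3 : ℂ)) / (2 * (Real.sqrt 3 : ℂ) * wp z)) ^ 3
      + ((deriv wp (-z) + (Real.sqrt 3 : ℂ)) / (2 * (Real.sqrt 3 : ℂ) * wp (-z))) ^ 3
      = 1 := by
  have ode := hex_ode z (by rwa [hex_mem])
  rw [hex_g3] at ode
  rw [hex_wp] at h0 ⊢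
  rw [PeriodPair.deriv_weierstrassP, PeriodPair.weierstrassP_neg, PeriodPair.derivWeierstrassP_neg]
  have hs : ((√3:ℝ):ℂ) ^ 2 = 3 := by
    rw [← Complex.ofReal_pow, Real.sq_sqrt (by norm_num)]; norm_num
  have hs0 : ((√3:ℝ):ℂ) ≠ 0 := by
    exact_mod_cast hex_s3.ne'
  generalize ((√3:ℝ):ℂ) = s at hs hs0 ⊢
  generalize hexL.weierstrassP z = P at *
  generalize hexL.derivWeierstrassP z = Q at *
  rw [div_pow, div_pow, ← add_div, div_eq_one_iff_eq (pow_ne_zero _ (mul_ne_zero (mul_ne_zero two_ne_zero hs0) h0))]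
  linear_combination 6 * s * ode + (2 * s - 8 * s * P ^ 3) * hs
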